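/- The triangle group T(2,3,4) is isomorphic (as a group) to the symmetric group S_4, the group of all permutations of a four-element set. -/

import Mathlib

/-- Relator set of the triangle group `T(a,b,c)`: the relators `x^a`, `y^b`, `z^c`
and `x·y·z` in the free group on three generators `x, y, z`. -/
def TriangleRels (a b c : ℕ) : Set (FreeGroup (Fin 3)) :=
  {FreeGroup.of 0 ^ a, FreeGroup.of 1 ^ b, FreeGroup.of 2 ^ c,
    FreeGroup.of 0 * FreeGroup.of 1 * FreeGroup.of 2}

/-- The triangle group `T(a,b,c)`. -/
abbrev TriangleGroup (a b c : ℕ) : Type :=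
  PresentedGroup (TriangleRels a b c)

/-!
A transposition and a 4-cycle give a surjection `T(2,3,4) → S₄`, so it suffices to show that
`T(2,3,4)` has at most 24 elements. Since `y = (z * x)⁻¹`, the group is generated by `x` and `z`,
subject to `x ^ 2 = z ^ 4 = (z * x) ^ 3 = 1`. The involutions `x` and `z * x * z⁻¹` have product
conjugate to `z * x`, of order dividing 3, so they generate a dihedral subgroup `H` with at most
6 elements, and the at most 4 cosets `z ^ k * H` are permuted by `x` and `z`. In `S₄`, the subgroup
`H` corresponds to a point stabilizer.
-/

section Generation

open Subgroup
open scoped Pointwise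

variable {G : Type*} [Group G]

theorem encard_mul_le (A B : Set G) : (A * B).encard ≤ A.encard * B.encard := by
  rw [← Set.image_mul_prod, ← Set.encard_prod]
  exact Set.encard_image_le _ _

theorem smul_set_eq_of_smul_set_subset {x : G} {A : Set G} (hx : x * x = 1) (hA : x • A ⊆ A) :
    x • A = A := by
  refine hA.antisymm ?_
  calc A = x • x • A := by rw [smul_smul, hx, one_smul]
    _ ⊆ x • A := Set.smul_set_mono hA

theorem coe_closure_subset_of_smul_set_eq {S A : Set G} (h_one : 1 ∈ A)
    (hA : ∀ s ∈ S, s • A = A) : (closure S : Set G) ⊆ A := by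
  have h_stab : closure S ≤ MulAction.stabilizer G A := (closure_le _).mpr fun s hs ↦ hA s hs
  intro g hg
  simpa using (MulAction.mem_stabilizer_set.mp (h_stab hg) 1).mpr h_one

theorem coe_zpowers_eq_image_Iio {g : G} {n : ℕ} (hn : 0 < n) (hg : g ^ n = 1) :
    (zpowers g : Set G) = (g ^ ·) '' Set.Iio n := by
  have hg_fin : IsOfFinOrder g := isOfFinOrder_iff_pow_eq_one.mpr ⟨n, hn, hg⟩
  ext h
  rw [SetLike.mem_coe, ← hg_fin.mem_powers_iff_mem_zpowers]
  constructor
  · rintro ⟨k, rfl⟩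
    exact ⟨k % n, Nat.mod_lt k hn, (pow_eq_pow_mod k hg).symm⟩
  · rintro ⟨k, -, rfl⟩
    exact ⟨k, rfl⟩

theorem encard_zpowers_le {g : G} {n : ℕ} (hn : 0 < n) (hg : g ^ n = 1) :
    (zpowers g : Set G).encard ≤ n := by
  rw [coe_zpowers_eq_image_Iio hn hg]
  calc ((g ^ ·) '' Set.Iio n).encard ≤ (Set.Iio n).encard := Set.encard_image_le _ _
    _ = n := by rw [← (Set.finite_Iio n).cast_ncard_eq, Set.ncard_Iio_nat]

theorem zpowers_le_normalizer_zpowers_mul {s t : G} (hs : s * s = 1) (ht : t * t = 1) :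
    zpowers s ≤ normalizer (zpowers (s * t) : Set G) := by
  have hconj : s * (s * t) * s⁻¹ = (s * t)⁻¹ := by
    rw [mul_inv_rev, ← mul_assoc, hs, one_mul, inv_eq_of_mul_eq_one_left ht]
  rw [zpowers_le, mem_normalizer_iff_map_conj_eq, MonoidHom.map_zpowers, MonoidHom.coe_coe,
    MulAut.conj_apply, hconj, zpowers_inv]

theorem closure_pair_eq_zpowers_sup_zpowers_mul (s t : G) :
    closure {s, t} = zpowers s ⊔ zpowers (s * t) := by
  apply le_antisymm
  · have hs : s ∈ zpowers s ⊔ zpowers (s * t) := mem_sup_left (mem_zpowers s)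
    have hst : s * t ∈ zpowers s ⊔ zpowers (s * t) := mem_sup_right (mem_zpowers (s * t))
    rw [closure_le, Set.pair_subset_iff]
    exact ⟨hs, (mul_mem_cancel_left hs).mp hst⟩
  · have hs : s ∈ closure {s, t} := subset_closure (Set.mem_insert s {t})
    have ht : t ∈ closure {s, t} := subset_closure (Set.mem_insert_of_mem s rfl)
    exact sup_le (zpowers_le.mpr hs) (zpowers_le.mpr (mul_mem hs ht))

theorem encard_closure_pair_le {s t : G} {n : ℕ} (hn : 0 < n) (hs : s * s = 1) (ht : t * t = 1)
    (hst : (s * t) ^ n = 1) : (closure {s, t} : Set G).encard ≤ 2 * n := by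
  have h_dihedral : (closure {s, t} : Set G) = zpowers s * zpowers (s * t) := by
    rw [closure_pair_eq_zpowers_sup_zpowers_mul,
      coe_mul_of_left_le_normalizer_right _ _ (zpowers_le_normalizer_zpowers_mul hs ht)]
  calc (closure {s, t} : Set G).encard
      = (zpowers s * zpowers (s * t) : Set G).encard := by rw [h_dihedral]
    _ ≤ (zpowers s : Set G).encard * (zpowers (s * t) : Set G).encard := encard_mul_le _ _
    _ ≤ 2 * n := mul_le_mul' (encard_zpowers_le two_pos ((sq s).trans hs))
        (encard_zpowers_le hn hst)

end Generation

section Octahedral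

open Subgroup
open scoped Pointwise

variable {G : Type*} [Group G] {x z : G}

theorem conj_mul_conj_self_eq_one (hx : x * x = 1) (z : G) : z * x * z⁻¹ * (z * x * z⁻¹) = 1 := by
  rw [conj_mul, hx, mul_one, mul_inv_cancel]

theorem mul_mul_eq_inv_mul_mul_inv (hx : x * x = 1) (hzx : (z * x) ^ 3 = 1) :
    x * z * x = z⁻¹ * x * z⁻¹ := by
  have h : z * x * z * (x * z * x) = 1 := by
    simpa only [pow_succ, pow_zero, one_mul, mul_assoc] using hzx
  rw [eq_inv_of_mul_eq_one_right h]
  simp only [mul_inv_rev, inv_eq_of_mul_eq_one_left hx, mul_assoc]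

theorem inv_mul_inv_eq_mul_of_pow_four (hz : z ^ 4 = 1) : z⁻¹ * z⁻¹ = z * z := by
  rw [← mul_inv_rev, inv_eq_iff_mul_eq_one, ← hz]
  simp only [pow_succ, pow_zero, one_mul, mul_assoc]

theorem mul_conj_pow_three (hx : x * x = 1) (hz : z ^ 4 = 1) (hzx : (z * x) ^ 3 = 1) :
    (x * (z * x * z⁻¹)) ^ 3 = 1 := by
  have hconj : x * (z * x * z⁻¹) = z⁻¹ * x * (z * x) * (z⁻¹ * x)⁻¹ :=
    calc x * (z * x * z⁻¹) = x * z * x * z⁻¹ := by simp only [mul_assoc]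
      _ = z⁻¹ * x * (z⁻¹ * z⁻¹) := by
        rw [mul_mul_eq_inv_mul_mul_inv hx hzx]; simp only [mul_assoc]
      _ = z⁻¹ * x * (z * z) := by rw [inv_mul_inv_eq_mul_of_pow_four hz]
      _ = z⁻¹ * x * (z * x) * (z⁻¹ * x)⁻¹ := by group
  rw [hconj, conj_pow, hzx, mul_one, mul_inv_cancel]

theorem mul_pow_mem_zpowers_mul_closure (hx : x * x = 1) (hz : z ^ 4 = 1)
    (hzx : (z * x) ^ 3 = 1) {k : ℕ} (hk : k < 4) :
    x * z ^ k ∈ (zpowers z * closure {x, z * x * z⁻¹} : Set G) := by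
  have hx_mem : x ∈ closure {x, z * x * z⁻¹} := subset_closure (Set.mem_insert _ _)
  have hy_mem : z * x * z⁻¹ ∈ closure {x, z * x * z⁻¹} :=
    subset_closure (Set.mem_insert_of_mem _ rfl)
  have hz_cube : z ^ 3 = z⁻¹ := eq_inv_of_mul_eq_one_left (by rw [← pow_succ, hz])
  have hxz : x * z = z⁻¹ * x * z⁻¹ * x := by
    rw [← mul_mul_eq_inv_mul_mul_inv hx hzx, mul_assoc (x * z), hx, mul_one]
  interval_cases k
  · refine ⟨1, one_mem _, x, hx_mem, ?_⟩
    group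
  · refine ⟨z ^ 2, npow_mem_zpowers z 2, z * x * z⁻¹ * x, mul_mem hy_mem hx_mem, ?_⟩
    calc z ^ 2 * (z * x * z⁻¹ * x) = z ^ 3 * x * z⁻¹ * x := by group
      _ = x * z ^ 1 := by rw [hz_cube, pow_one, hxz]
  · refine ⟨z, mem_zpowers z, x * (z * x * z⁻¹), mul_mem hx_mem hy_mem, ?_⟩
    calc z * (x * (z * x * z⁻¹)) = z * (x * z * x) * z⁻¹ := by group
      _ = x * (z⁻¹ * z⁻¹) := by rw [mul_mul_eq_inv_mul_mul_inv hx hzx]; group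
      _ = x * z ^ 2 := by rw [inv_mul_inv_eq_mul_of_pow_four hz, sq]
  · refine ⟨z ^ 3, npow_mem_zpowers z 3, z * x * z⁻¹, hy_mem, ?_⟩
    calc z ^ 3 * (z * x * z⁻¹) = z ^ 4 * x * z⁻¹ := by group
      _ = x * z ^ 3 := by rw [hz, one_mul, hz_cube]

theorem coe_closure_pair_subset_zpowers_mul_closure (hx : x * x = 1) (hz : z ^ 4 = 1)
    (hzx : (z * x) ^ 3 = 1) :
    (closure {x, z} : Set G) ⊆ zpowers z * closure {x, z * x * z⁻¹} := by
  apply coe_closure_subset_of_smul_set_eq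
  · exact ⟨1, one_mem _, 1, one_mem _, mul_one 1⟩
  · rintro _ (rfl | rfl)
    · apply smul_set_eq_of_smul_set_subset hx
      rintro _ ⟨_, ⟨g, hg, h, hh, rfl⟩, rfl⟩
      obtain ⟨k, hk, rfl⟩ := (coe_zpowers_eq_image_Iio four_pos hz).subset hg
      obtain ⟨g', hg', h', hh', hkg⟩ := mul_pow_mem_zpowers_mul_closure hx hz hzx hk
      refine ⟨g', hg', h' * h, mul_mem hh' hh, ?_⟩
      simpa only [smul_eq_mul, mul_assoc] using congrArg (· * h) hkg
    · rw [← smul_mul_assoc, smul_coe_set (mem_zpowers _)]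

theorem encard_closure_pair_le_twentyFour (hx : x * x = 1) (hz : z ^ 4 = 1)
    (hzx : (z * x) ^ 3 = 1) : (closure {x, z} : Set G).encard ≤ 24 :=
  calc (closure {x, z} : Set G).encard
      ≤ (zpowers z * closure {x, z * x * z⁻¹} : Set G).encard :=
        Set.encard_le_encard (coe_closure_pair_subset_zpowers_mul_closure hx hz hzx)
    _ ≤ (zpowers z : Set G).encard * (closure {x, z * x * z⁻¹} : Set G).encard :=
        encard_mul_le _ _
    _ ≤ (4 : ℕ) * (2 * (3 : ℕ)) := mul_le_mul' (encard_zpowers_le four_pos hz)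
        (encard_closure_pair_le three_pos hx (conj_mul_conj_self_eq_one hx z)
          (mul_conj_pow_three hx hz hzx))
    _ = 24 := by norm_num

end Octahedral

namespace TriangleGroup

variable {a b c : ℕ}

theorem of_zero_pow : (PresentedGroup.of 0 : TriangleGroup a b c) ^ a = 1 :=
  PresentedGroup.one_of_mem (by simp [TriangleRels])

theorem of_one_pow : (PresentedGroup.of 1 : TriangleGroup a b c) ^ b = 1 :=
  PresentedGroup.one_of_mem (by simp [TriangleRels])

theorem of_two_pow : (PresentedGroup.of 2 : TriangleGroup a b c) ^ c = 1 :=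
  PresentedGroup.one_of_mem (by simp [TriangleRels])

theorem of_zero_mul_of_one_mul_of_two :
    (PresentedGroup.of 0 * PresentedGroup.of 1 * PresentedGroup.of 2 : TriangleGroup a b c) = 1 :=
  PresentedGroup.one_of_mem (by simp [TriangleRels])

theorem inv_of_one :
    (PresentedGroup.of 1 : TriangleGroup a b c)⁻¹ = PresentedGroup.of 2 * PresentedGroup.of 0 := by
  have h : (PresentedGroup.of 0 * (PresentedGroup.of 1 * PresentedGroup.of 2) :
      TriangleGroup a b c) = 1 := by
    rw [← mul_assoc, of_zero_mul_of_one_mul_of_two]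
  exact inv_eq_of_mul_eq_one_right (by rw [← mul_assoc, mul_eq_one_comm.mp h])

theorem of_two_mul_of_zero_pow :
    (PresentedGroup.of 2 * PresentedGroup.of 0 : TriangleGroup a b c) ^ b = 1 := by
  rw [← inv_of_one, inv_pow, of_one_pow, inv_one]

theorem closure_of_zero_of_two :
    Subgroup.closure {(PresentedGroup.of 0 : TriangleGroup a b c), PresentedGroup.of 2} = ⊤ := by
  set H := Subgroup.closure {(PresentedGroup.of 0 : TriangleGroup a b c), PresentedGroup.of 2}
  have hx : PresentedGroup.of 0 ∈ H := Subgroup.subset_closure (Set.mem_insert _ _)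
  have hz : PresentedGroup.of 2 ∈ H := Subgroup.subset_closure (Set.mem_insert_of_mem _ rfl)
  have hy : PresentedGroup.of 1 ∈ H := inv_mem_iff.mp (inv_of_one ▸ mul_mem hz hx)
  refine (Subgroup.eq_top_iff' H).mpr (PresentedGroup.generated_by _ H fun i ↦ ?_)
  fin_cases i
  exacts [hx, hy, hz]

section Lift

variable {G : Type*} [Group G] {x y z : G}

/-- The homomorphism out of `T(a,b,c)` given by its universal property, determined by the images
`x`, `y`, `z` of the three generators. -/
def lift (hx : x ^ a = 1) (hy : y ^ b = 1) (hz : z ^ c = 1) (hxyz : x * y * z = 1) :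
    TriangleGroup a b c →* G :=
  PresentedGroup.toGroup (f := ![x, y, z]) <| by
    rintro _ (rfl | rfl | rfl | rfl) <;> simpa

theorem lift_surjective (hx : x ^ a = 1) (hy : y ^ b = 1) (hz : z ^ c = 1) (hxyz : x * y * z = 1)
    (hgen : Subgroup.closure {x, z} = ⊤) : Function.Surjective (lift hx hy hz hxyz) := by
  rw [← MonoidHom.range_eq_top, eq_top_iff, ← hgen, Subgroup.closure_le, Set.pair_subset_iff]
  exact ⟨⟨PresentedGroup.of 0, PresentedGroup.toGroup.of _⟩,
    ⟨PresentedGroup.of 2, PresentedGroup.toGroup.of _⟩⟩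

end Lift

theorem two_three_four_finite_and_natCard_le :
    Finite (TriangleGroup 2 3 4) ∧ Nat.card (TriangleGroup 2 3 4) ≤ 24 := by
  have h := encard_closure_pair_le_twentyFour ((sq _).symm.trans of_zero_pow) of_two_pow
    (of_two_mul_of_zero_pow (a := 2) (b := 3) (c := 4))
  rw [closure_of_zero_of_two, Subgroup.coe_top] at h
  obtain ⟨h_fin, h_card⟩ := Set.encard_le_coe_iff_finite_ncard_le.mp h
  exact ⟨Set.finite_univ_iff.mp h_fin, Set.ncard_univ (TriangleGroup 2 3 4) ▸ h_card⟩

theorem two_three_four_exists_surjective_hom_perm :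
    ∃ f : TriangleGroup 2 3 4 →* Equiv.Perm (Fin 4), Function.Surjective f := by
  have hgen : Subgroup.closure {Equiv.swap 0 1, finRotate 4} = ⊤ := by
    rw [Set.pair_comm]
    exact Equiv.Perm.closure_cycle_adjacent_swap isCycle_finRotate support_finRotate 0
  exact ⟨lift (y := (finRotate 4 * Equiv.swap 0 1)⁻¹) (by decide) (by decide) (by decide)
    (by decide), lift_surjective _ _ _ _ hgen⟩

end TriangleGroup

/-- The triangle group `T(2,3,4)` is isomorphic to the symmetric group `S₄`. -/
theorem triangleGroup_two_three_four_iso_S4 :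
    Nonempty (TriangleGroup 2 3 4 ≃* Equiv.Perm (Fin 4)) := by
  obtain ⟨f, hf⟩ := TriangleGroup.two_three_four_exists_surjective_hom_perm
  obtain ⟨_, hcard⟩ := TriangleGroup.two_three_four_finite_and_natCard_le
  have hperm : Nat.card (Equiv.Perm (Fin 4)) = 24 := by
    rw [Nat.card_perm, Nat.card_fin]; rfl
  exact ⟨MulEquiv.ofBijective f (hf.bijective_of_nat_card_le (hcard.trans hperm.ge))⟩
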